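/- Let (R, m) be a regular local ring of dimension n, let p be a prime ideal of R with ht_R(p) ≤ n − 2, and let h ∈ R ∖ p. Then Hom_R(R/p, E_R(R/p))_h is not a finitely generated R_h-module. -/

import Mathlib

open CategoryTheory Opposite

noncomputable section

/-- Krull dimension of the support of a module. -/
def moduleSuppDim (R : Type) [CommRing R] (M : Type) [AddCommGroup M] [Module R M] :
    WithBot ℕ∞ :=
  Order.krullDim (Module.support R M)

/-- `M` has injective dimension at most `n` (as `R`-module), characterized by
vanishing of `Ext^i(N, M)` for all `i > n`. -/
def injDimLE (R : Type) [CommRing R] (M : Type) [AddCommGroup M] [Module R M] (n : ℕ) : Prop :=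
  ∀ (N : ModuleCat R) (i : ℕ), n < i →
    Subsingleton (((Ext R (ModuleCat R) i).obj (op N)).obj (ModuleCat.of R M))

/-- The injective dimension of `M` as an `R`-module, valued in `ℕ∞`. -/
def injDim (R : Type) [CommRing R] (M : Type) [AddCommGroup M] [Module R M] : ℕ∞ :=
  sInf {n : ℕ∞ | ∃ m : ℕ, (m : ℕ∞) = n ∧ injDimLE R M m}

/-- The height of an ideal: the infimum of the heights of primes containing it. -/
def idealHeight (R : Type) [CommRing R] (I : Ideal R) : ℕ∞ :=
  sInf {h : ℕ∞ | ∃ p : PrimeSpectrum R, I ≤ p.asIdeal ∧ Order.height p = h}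

/-- A regular local ring: a Noetherian local ring whose maximal ideal can be generated
by `dim R` elements. -/
def IsRegularLocal (R : Type) [CommRing R] [IsLocalRing R] : Prop :=
  IsNoetherianRing R ∧
    ∃ s : Finset R, Ideal.span (s : Set R) = IsLocalRing.maximalIdeal R ∧
      (s.card : WithBot ℕ∞) = ringKrullDim R

/-- A ring contains a field if some subring of it is a field. -/
def ContainsField (R : Type) [CommRing R] : Prop :=
  ∃ k : Subring R, IsField k

/-- The underlying module of the `i`-th local cohomology of `R` with support in `I`. -/
abbrev LocalCohomologyMod (R : Type) [CommRing R] (I : Ideal R) (i : ℕ) : Type :=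
  (localCohomology I i).obj (ModuleCat.of R R)

end
/-- `f : M →ₗ[R] E` presents `E` as an injective hull (injective envelope) of `M`:
`E` is injective, `f` is injective, and the image of `f` is an essential submodule of `E`. -/
def IsInjectiveHull (R : Type) [CommRing R] {M E : Type} [AddCommGroup M] [Module R M]
    [AddCommGroup E] [Module R E] (f : M →ₗ[R] E) : Prop :=
  Module.Injective R E ∧ Function.Injective f ∧
    ∀ N : Submodule R E, N ≠ ⊥ → N ⊓ LinearMap.range f ≠ ⊥

open RingTheory.Sequence IsLocalRing Pointwise in
/-- Dropping an `M`-regular element lowers Ext vanishing by one. -/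
lemma aux_ext_quot {R : Type} [CommRing R] (N M : ModuleCat.{0} R) (k : ℕ) (x : R)
    (hx : IsSMulRegular M x)
    (h : ∀ i < k + 1, Subsingleton (CategoryTheory.Abelian.Ext N M i)) :
    ∀ i < k, Subsingleton (CategoryTheory.Abelian.Ext N (ModuleCat.of R (QuotSMulTop x M)) i) := by
  intro i hi
  have zero1 := AddCommGrpCat.isZero_of_iff_subsingleton.mpr (h i (by omega))
  have zero2 := AddCommGrpCat.isZero_of_iff_subsingleton.mpr (h (i + 1) (by omega))
  exact AddCommGrpCat.subsingleton_of_isZero <| ShortComplex.Exact.isZero_of_both_zeros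
    ((CategoryTheory.Abelian.Ext.covariant_sequence_exact₃' N hx.smulShortComplex_shortExact) i (i + 1) rfl)
    (zero1.eq_zero_of_src _) (zero2.eq_zero_of_tgt _)

lemma aux_dim_lt {R : Type} [CommRing R] (p q : Ideal R) [p.IsPrime] (hpq : p ≤ q)
    (x : R) (hxp : x ∉ p) (hxq : x ∈ q) :
    ringKrullDim (R ⧸ q) + 1 ≤ ringKrullDim (R ⧸ p) := by
  refine ringKrullDim_succ_le_of_surjective (Ideal.Quotient.factor hpq)
    (Ideal.Quotient.factor_surjective hpq) (r := Ideal.Quotient.mk p x) ?_ ?_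
  · rw [mem_nonZeroDivisors_iff_ne_zero, Ne, Ideal.Quotient.eq_zero_iff_mem]
    exact hxp
  · rw [Ideal.Quotient.factor_mk, Ideal.Quotient.eq_zero_iff_mem]
    exact hxq

open RingTheory.Sequence IsLocalRing Pointwise in
lemma aux_ass_quot {R : Type} [CommRing R] [IsLocalRing R] [IsNoetherianRing R]
    (M : Type) [AddCommGroup M] [Module R M] [Module.Finite R M] (p : Ideal R)
    (hp : IsAssociatedPrime p M) (x : R) (hxm : x ∈ maximalIdeal R) (hx : IsSMulRegular M x) :
    ∃ q : Ideal R, IsAssociatedPrime q (QuotSMulTop x M) ∧ p ≤ q ∧ x ∈ q := by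
  obtain ⟨hpp, y, hy⟩ := isAssociatedPrime_iff.mp hp
  let N : Submodule R M := Submodule.torsionBySet R M p
  have hyN : y ∈ N := by
    rw [Submodule.mem_torsionBySet_iff]
    rintro ⟨a, ha⟩
    have : a ∈ p := ha
    rw [hy] at this
    simpa [Submodule.mem_colon_singleton] using this
  have hN : ∃ n ∈ N, n ∉ (x • (⊤ : Submodule R M)) := by
    by_contra! hcon
    have : N = ⊥ := by
      refine Submodule.eq_bot_of_le_smul_of_le_jacobson_bot (Ideal.span {x}) N
        (IsNoetherian.noetherian N) ?_ ?_
      · intro n hn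
        obtain ⟨m, -, hm⟩ := (Submodule.mem_smul_pointwise_iff_exists _ _ _).mp (hcon n hn)
        rw [← hm, Submodule.ideal_span_singleton_smul]
        refine Submodule.smul_mem_pointwise_smul _ _ _ ?_
        rw [Submodule.mem_torsionBySet_iff]
        intro a
        apply hx
        have := (Submodule.mem_torsionBySet_iff _ _).mp hn a
        simp only [smul_zero]
        rw [← hm] at this
        rw [smul_comm]
        exact this
      · rw [Ideal.span_singleton_le_iff_mem, jacobson_eq_maximalIdeal _ bot_ne_top]
        exact hxm
    rw [this, Submodule.mem_bot] at hyN
    apply hpp.ne_top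
    rw [hy, hyN]
    simp
  obtain ⟨n, hn, hnx⟩ := hN
  obtain ⟨q, hq, hle⟩ := exists_le_isAssociatedPrime_of_isNoetherianRing R
    (Submodule.Quotient.mk n : QuotSMulTop x M)
    (by rwa [Ne, Submodule.Quotient.mk_eq_zero])
  refine ⟨q, hq, ?_, ?_⟩
  · intro a ha
    apply hle
    rw [Submodule.mem_colon_singleton, Submodule.mem_bot, ← Submodule.Quotient.mk_smul]
    have := (Submodule.mem_torsionBySet_iff _ _).mp hn ⟨a, ha⟩
    simp only at this
    rw [show a • n = 0 from this, Submodule.Quotient.mk_zero]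
  · apply hle
    rw [Submodule.mem_colon_singleton, Submodule.mem_bot, ← Submodule.Quotient.mk_smul,
      Submodule.Quotient.mk_eq_zero]
    exact Submodule.smul_mem_pointwise_smul _ _ _ trivial

open RingTheory.Sequence IsLocalRing Pointwise in
lemma aux_depth_le {R : Type} [CommRing R] [IsLocalRing R] [IsNoetherianRing R] (k : ℕ) :
    ∀ (M : ModuleCat.{0} R) [Module.Finite R M]
    (_ : ∀ i < k, Subsingleton
      (CategoryTheory.Abelian.Ext (ModuleCat.of R (R ⧸ maximalIdeal R)) M i))
    (p : Ideal R) (_ : IsAssociatedPrime p M), (k : WithBot ℕ∞) ≤ ringKrullDim (R ⧸ p) := by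
  induction k with
  | zero =>
    intro M _ _ p hp
    have := hp.isPrime
    simpa using ringKrullDim_nonneg_of_nontrivial (R := R ⧸ p)
  | succ k ih =>
    intro M _ h p hp
    have := hp.isPrime
    have : Subsingleton (ModuleCat.of R (R ⧸ maximalIdeal R) ⟶ M) :=
      CategoryTheory.Abelian.Ext.addEquiv₀.subsingleton_congr.mp (h 0 k.zero_lt_succ)
    have : Subsingleton ((R ⧸ maximalIdeal R) →ₗ[R] M) :=
      (ModuleCat.homAddEquiv (M := ModuleCat.of R (R ⧸ maximalIdeal R)) (N := M)).symm.subsingleton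
    obtain ⟨x, mem_ann, hx⟩ := IsSMulRegular.subsingleton_linearMap_iff.mp this
    rw [Ideal.annihilator_quotient] at mem_ann
    obtain ⟨q, hq, hpq, hxq⟩ := aux_ass_quot M p hp x mem_ann hx
    have h1 := ih (ModuleCat.of R (QuotSMulTop x M)) (aux_ext_quot _ M k x hx h) q hq
    have hxp : x ∉ p := by
      intro hxp
      have : x ∈ ⋃ p ∈ associatedPrimes R M, (p : Set R) := Set.mem_biUnion hp hxp
      rw [biUnion_associatedPrimes_eq_compl_regular R M] at this
      exact this hx
    refine le_trans ?_ (aux_dim_lt p q hpq x hxp hxq)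
    push_cast
    gcongr

open RingTheory.Sequence IsLocalRing Pointwise in
lemma aux_grade {R : Type} [CommRing R] [IsLocalRing R] [IsNoetherianRing R]
    (p : Ideal R) [p.IsPrime] (k : ℕ) :
    ∀ (M : ModuleCat.{0} R) [Module.Finite R M]
    (_ : ∀ i < k, Subsingleton
      (CategoryTheory.Abelian.Ext (ModuleCat.of R (R ⧸ maximalIdeal R)) M i)),
    ∃ rs : List R, (∀ r ∈ rs, r ∈ p) ∧ IsWeaklyRegular M rs ∧
      (k : WithBot ℕ∞) ≤ ringKrullDim (R ⧸ p) + rs.length := by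
  induction k with
  | zero =>
    intro M _ _
    refine ⟨[], by simp, .nil _ _, ?_⟩
    simpa using ringKrullDim_nonneg_of_nontrivial (R := R ⧸ p)
  | succ k ih =>
    intro M _ h
    by_cases hx : ∃ x ∈ p, IsSMulRegular M x
    · obtain ⟨x, hxp, hx⟩ := hx
      obtain ⟨rs, h1, h2, h3⟩ := ih (ModuleCat.of R (QuotSMulTop x M)) (aux_ext_quot _ M k x hx h)
      refine ⟨x :: rs, by simpa using ⟨hxp, h1⟩, .cons hx h2, ?_⟩
      push_cast [List.length_cons]
      rw [← add_assoc]
      gcongr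
    · push Not at hx
      have : ∃ q ∈ associatedPrimes R M, p ≤ q := by
        apply (Ideal.subset_union_prime_finite (f := id) (associatedPrimes.finite R M) p p _).mp
        · have := biUnion_associatedPrimes_eq_compl_regular R M
          simp only [id]
          rw [this]
          exact fun r hr ↦ hx r hr
        · exact fun I hin _ _ ↦ IsAssociatedPrime.isPrime hin
      obtain ⟨q, hq, hpq⟩ := this
      refine ⟨[], by simp, .nil _ _, ?_⟩
      simp only [List.length_nil, Nat.cast_zero, add_zero]
      exact (aux_depth_le _ M h q hq).trans
        (ringKrullDim_le_of_surjective (Ideal.Quotient.factor hpq)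
          (Ideal.Quotient.factor_surjective hpq))

open RingTheory.Sequence IsLocalRing Pointwise in
lemma aux_CM {R : Type} [CommRing R] [IsLocalRing R] [IsNoetherianRing R]
    (p : Ideal R) [p.IsPrime] (ss : List R) (hs : ∀ r ∈ ss, r ∈ maximalIdeal R)
    (hreg : IsWeaklyRegular R ss) :
    (ss.length : WithBot ℕ∞) ≤ ringKrullDim (R ⧸ p) + p.height := by
  have hreg' := IsRegular.of_isWeaklyRegular_of_mem_maximalIdeal R hs hreg
  have hext := ModuleCat.subsingleton_ext_of_exists_isRegular (maximalIdeal R)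
    (ModuleCat.of R (R ⧸ maximalIdeal R))
    (by rw [Module.support_eq_zeroLocus, Ideal.annihilator_quotient]) (ModuleCat.of R R)
    (by simpa using (maximalIdeal.isMaximal R).ne_top.lt_top) ss hs hreg'
  obtain ⟨rs, h1, h2, h3⟩ := aux_grade p ss.length (ModuleCat.of R R) hext
  refine h3.trans ?_
  gcongr
  have h4 := IsWeaklyRegular.isRegular_of_isLocalization_of_mem (Localization.AtPrime p) p h2 h1
  have h5 := ringKrullDim_add_length_eq_ringKrullDim_of_isRegular _ h4
  rw [IsLocalization.AtPrime.ringKrullDim_eq_height p (Localization.AtPrime p), List.length_map] at h5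
  rw [← h5]
  have : Nontrivial (Localization.AtPrime p ⧸ Ideal.ofList
      (List.map (algebraMap R (Localization.AtPrime p)) rs)) := Ideal.Quotient.nontrivial_iff.mpr
    (fun h0 => h4.top_ne_smul (by rw [h0]; simp))
  refine le_add_of_nonneg_left ?_
  apply ringKrullDim_nonneg_of_nontrivial

open RingTheory.Sequence IsLocalRing Pointwise in
lemma aux_regular (n : ℕ) : ∀ (R : Type) [CommRing R] [IsLocalRing R] [IsNoetherianRing R]
    (s : Finset R) (_ : Ideal.span (s : Set R) = maximalIdeal R) (_ : s.card ≤ n)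
    (_ : (n : WithBot ℕ∞) ≤ ringKrullDim R),
    IsDomain R ∧ ∃ rs : List R, rs.length = n ∧ (∀ r ∈ rs, r ∈ maximalIdeal R) ∧
      IsWeaklyRegular R rs := by
  classical
  induction n with
  | zero =>
    intro R _ _ _ s hs hc hd
    have : s = ∅ := by simpa using hc
    subst this
    have hm : maximalIdeal R = ⊥ := by simpa using hs.symm
    exact ⟨(isField_iff_maximalIdeal_eq.mpr hm).isDomain, [], rfl, by simp, .nil _ _⟩
  | succ n ih =>
    intro R _ _ _ s hs hc hd
    have hht : (maximalIdeal R).height ≠ 0 := by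
      intro h0
      rw [← maximalIdeal_height_eq_ringKrullDim, h0] at hd
      norm_cast at hd
    have hx : ∃ x ∈ maximalIdeal R, x ∉ maximalIdeal R ^ 2 ∧ ∀ q ∈ minimalPrimes R, x ∉ q := by
      by_contra! hcon
      have h1 := (Ideal.subset_union_prime' (f := id) (a := maximalIdeal R ^ 2)
        (b := maximalIdeal R ^ 2) (s := (minimalPrimes.finite_of_isNoetherianRing R).toFinset)
        (I := maximalIdeal R) (by
          intro i hi
          rw [Set.Finite.mem_toFinset] at hi
          exact hi.1.1)).mp (by
          intro x hx
          by_cases hx2 : x ∈ maximalIdeal R ^ 2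
          · exact Or.inl (Or.inl hx2)
          · obtain ⟨q, hq, hxq⟩ := hcon x hx hx2
            refine Or.inr (Set.mem_biUnion (x := q) ?_ hxq)
            simpa using hq)
      have h2 : ¬ maximalIdeal R ≤ maximalIdeal R ^ 2 := by
        intro hle
        apply hht
        have : maximalIdeal R = ⊥ := by
          refine Submodule.eq_bot_of_le_smul_of_le_jacobson_bot (maximalIdeal R) _
            (IsNoetherian.noetherian _) ?_ ?_
          · rw [smul_eq_mul, ← pow_two]; exact hle
          · rw [jacobson_eq_maximalIdeal _ bot_ne_top]
        rw [this, Ideal.height_bot]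
      rcases h1 with h1 | h1 | ⟨q, hq, h1⟩
      · exact h2 h1
      · exact h2 h1
      · rw [Set.Finite.mem_toFinset] at hq
        have := hq.1.1
        have h3 := Ideal.height_eq_zero_iff.mpr hq
        have h4 := Ideal.height_mono h1
        simp only [id] at h4
        rw [h3] at h4
        exact hht (le_antisymm h4 bot_le)
    obtain ⟨x, hxm, hx2, hxq⟩ := hx
    have hxs := hxm
    rw [← hs] at hxs
    obtain ⟨a, -, ha⟩ := Submodule.mem_span_finset.mp hxs
    have hi : ∃ i ∈ s, IsUnit (a i) := by
      by_contra! hcon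
      apply hx2
      rw [← ha, pow_two]
      refine Ideal.sum_mem _ fun i hi => Ideal.mul_mem_mul (hcon i hi) ?_
      rw [← hs]
      exact Ideal.subset_span hi
    obtain ⟨i, hi, hu⟩ := hi
    let I : Ideal R := Ideal.span {x}
    have hI : I ≤ maximalIdeal R := by rwa [Ideal.span_singleton_le_iff_mem]
    have : Nontrivial (R ⧸ I) := Ideal.Quotient.nontrivial_iff.mpr
      (fun h => (maximalIdeal.isMaximal R).ne_top (top_le_iff.mp (h ▸ hI)))
    have hloc : IsLocalRing (R ⧸ I) :=
      IsLocalRing.of_surjective' (Ideal.Quotient.mk I) Ideal.Quotient.mk_surjective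
    have hmax : (maximalIdeal R).map (Ideal.Quotient.mk I) = maximalIdeal (R ⧸ I) := by
      apply eq_maximalIdeal
      refine (Ideal.map_eq_top_or_isMaximal_of_surjective (Ideal.Quotient.mk I)
        Ideal.Quotient.mk_surjective (maximalIdeal.isMaximal R)).resolve_left ?_
      intro h
      have h' := congrArg (Ideal.comap (Ideal.Quotient.mk I)) h
      rw [Ideal.comap_map_of_surjective _ Ideal.Quotient.mk_surjective, Ideal.comap_top,
        ← RingHom.ker_eq_comap_bot, Ideal.mk_ker, sup_eq_left.mpr hI] at h'
      exact (maximalIdeal.isMaximal R).ne_top h'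
    have hspan : Ideal.span (((s.erase i).image (Ideal.Quotient.mk I) : Finset (R ⧸ I)) : Set (R ⧸ I))
        = maximalIdeal (R ⧸ I) := by
      rw [← hmax, ← hs, Ideal.map_span]
      apply le_antisymm
      · apply Ideal.span_mono
        rw [Finset.coe_image]
        exact Set.image_mono (by simp)
      · rw [Ideal.span_le]
        rintro _ ⟨j, hj, rfl⟩
        have key : ∀ j ∈ s.erase i, Ideal.Quotient.mk I j ∈ Ideal.span
            (((s.erase i).image (Ideal.Quotient.mk I) : Finset (R ⧸ I)) : Set (R ⧸ I)) := by
          intro j hj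
          exact Ideal.subset_span (Finset.mem_coe.mpr (Finset.mem_image_of_mem _ hj))
        by_cases hji : j = i
        · subst hji
          have h0 : Ideal.Quotient.mk I x = 0 :=
            Ideal.Quotient.eq_zero_iff_mem.mpr (Ideal.mem_span_singleton_self x)
          rw [← ha, ← Finset.add_sum_erase s _ hi, map_add, map_sum] at h0
          have h1 : Ideal.Quotient.mk I (a j) * Ideal.Quotient.mk I j ∈ Ideal.span
            (((s.erase j).image (Ideal.Quotient.mk I) : Finset (R ⧸ I)) : Set (R ⧸ I)) := by
            rw [← map_mul, ← smul_eq_mul, eq_neg_of_add_eq_zero_left h0]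
            refine neg_mem (Ideal.sum_mem _ fun l hl => ?_)
            rw [smul_eq_mul, map_mul]
            exact Ideal.mul_mem_left _ _ (key l hl)
          exact (Ideal.unit_mul_mem_iff_mem _ (hu.map (Ideal.Quotient.mk I))).mp h1
        · exact key j (Finset.mem_erase.mpr ⟨hji, hj⟩)
    have hcard : ((s.erase i).image (Ideal.Quotient.mk I)).card ≤ n := by
      refine Finset.card_image_le.trans ?_
      rw [Finset.card_erase_of_mem hi]
      omega
    have hdim : (n : WithBot ℕ∞) ≤ ringKrullDim (R ⧸ I) := by
      have h1 := ringKrullDim_le_ringKrullDim_quotient_add_card ({x} : Finset R) (by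
        rw [ringJacobson_eq_maximalIdeal]; simpa using hxm)
      rw [Finset.coe_singleton, Finset.card_singleton] at h1
      have h2 := hd.trans h1
      have h3 : FiniteRingKrullDim (R ⧸ I) := inferInstance
      obtain ⟨d, hd'⟩ : ∃ d : ℕ, ringKrullDim (R ⧸ I) = d := by
        rw [← maximalIdeal_height_eq_ringKrullDim]
        obtain ⟨d, hd'⟩ := ENat.ne_top_iff_exists.mp
          (Ideal.height_ne_top_of_isPrime (I := maximalIdeal (R ⧸ I)))
        exact ⟨d, by rw [← hd']; rfl⟩
      change _ ≤ ringKrullDim (R ⧸ I) + _ at h2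
      rw [hd'] at h2 ⊢
      norm_cast at h2 ⊢
      omega
    obtain ⟨hdom, rs', hlen, hmem, hreg⟩ := ih (R ⧸ I) _ hspan hcard hdim
    have hIp : I.IsPrime := (Ideal.Quotient.isDomain_iff_prime I).mp hdom
    have hbot : (⊥ : Ideal R).IsPrime := by
      obtain ⟨q, hq, hqI⟩ := Ideal.exists_minimalPrimes_le (I := ⊥) (J := I) bot_le
      have hqp := hq.1.1
      have : q = ⊥ := by
        refine Submodule.eq_bot_of_le_smul_of_le_jacobson_bot I _
            (IsNoetherian.noetherian _) ?_ ?_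
        · intro b hb
          obtain ⟨c, rfl⟩ := Ideal.mem_span_singleton'.mp (hqI hb)
          rw [mul_comm]
          refine Submodule.smul_mem_smul (Ideal.mem_span_singleton_self x) ?_
          exact (hqp.mem_or_mem hb).resolve_right (hxq q hq)
        · rw [jacobson_eq_maximalIdeal _ bot_ne_top]; exact hI
      rwa [this] at hqp
    have hdomR : IsDomain R := IsDomain.of_bot_isPrime R
    refine ⟨hdomR, ?_⟩
    have hx0 : x ≠ 0 := by
      rintro rfl
      exact hx2 (zero_mem _)
    obtain ⟨rs, rfl⟩ := List.map_surjective_iff.mpr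
      (Ideal.Quotient.mk_surjective (I := I)) rs'
    refine ⟨x :: rs, by simpa using hlen, ?_, ?_⟩
    · intro r hr
      rcases List.mem_cons.mp hr with rfl | hr
      · exact hxm
      · have := hmem _ (List.mem_map_of_mem hr)
        rw [mem_maximalIdeal, mem_nonunits_iff] at this ⊢
        exact fun h => this (h.map _)
    · refine .cons ?_ ?_
      · exact IsSMulRegular.of_ne_zero hx0
      · have h1 : IsWeaklyRegular (R ⧸ I) rs :=
          (isWeaklyRegular_map_algebraMap_iff (R ⧸ I) (R ⧸ I) rs).mp hreg
        refine (LinearEquiv.isWeaklyRegular_congr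
          (Submodule.quotEquivOfEq (x • (⊤ : Submodule R R)) I ?_) rs).mpr h1
        rw [← Submodule.ideal_span_singleton_smul, smul_eq_mul, Ideal.mul_top]

open IsLocalRing in
lemma aux_prime {A : Type} [CommRing A] [IsLocalRing A] [IsNoetherianRing A] [IsDomain A]
    (hd : 2 ≤ ringKrullDim A) (h : A) (hh : h ≠ 0) :
    ∃ q : Ideal A, q.IsPrime ∧ q ≠ ⊥ ∧ h ∉ q := by
  have hht : ¬ (maximalIdeal A).height ≤ 1 := by
    intro h0
    rw [← maximalIdeal_height_eq_ringKrullDim] at hd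
    have h1 : (2 : ℕ∞) ≤ (maximalIdeal A).height := WithBot.coe_le_coe.mp hd
    exact absurd (h1.trans h0) (by decide)
  by_cases hu : IsUnit h
  · refine ⟨maximalIdeal A, inferInstance, ?_, fun hm => hm hu⟩
    intro hb
    rw [hb, Ideal.height_bot] at hht
    simp at hht
  have hy : ∃ y ∈ maximalIdeal A, ∀ q ∈ (Ideal.span {h}).minimalPrimes, y ∉ q := by
    by_contra! hcon
    have := (Ideal.subset_union_prime_finite (f := id)
      (Ideal.finite_minimalPrimes_of_isNoetherianRing A (Ideal.span {h})) ⊥ ⊥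
      (fun q hq _ _ => hq.1.1) (I := maximalIdeal A)).mp (by
        intro y hy
        obtain ⟨q, hq, hyq⟩ := hcon y hy
        exact Set.mem_biUnion (x := q) hq hyq)
    obtain ⟨q, hq, hle⟩ := this
    exact hht ((Ideal.height_mono hle).trans
      (Ideal.height_le_one_of_isPrincipal_of_mem_minimalPrimes _ q hq))
  obtain ⟨y, hym, hyq⟩ := hy
  obtain ⟨q, hq, -⟩ := Ideal.exists_minimalPrimes_le (I := Ideal.span {y}) (J := maximalIdeal A)
    (by rwa [Ideal.span_singleton_le_iff_mem])
  have hqp := hq.1.1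
  have hyq' : y ∈ q := hq.1.2 (Ideal.mem_span_singleton_self y)
  refine ⟨q, hqp, ?_, ?_⟩
  · rintro rfl
    obtain ⟨r, hr, -⟩ := Ideal.exists_minimalPrimes_le (I := Ideal.span {h}) (J := maximalIdeal A)
      (by rw [Ideal.span_singleton_le_iff_mem]; exact hu)
    apply hyq r hr
    rw [(Submodule.mem_bot A).mp hyq']
    exact zero_mem _
  · intro hhq
    obtain ⟨r, hr, hrq⟩ := Ideal.exists_minimalPrimes_le (I := Ideal.span {h}) (J := q)
      (by rwa [Ideal.span_singleton_le_iff_mem])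
    have hrp := hr.1.1
    have hr0 : r ≠ ⊥ := by
      rintro rfl
      exact hh ((Submodule.mem_bot A).mp (hr.1.2 (Ideal.mem_span_singleton_self h)))
    have h1 := Ideal.height_le_one_of_isPrincipal_of_mem_minimalPrimes _ q hq
    have h2 : 1 ≤ r.height := by
      rw [Order.one_le_iff_ne_zero, Ne, Ideal.height_eq_zero_iff_eq_bot]
      exact hr0
    have : r = q := Ideal.eq_of_le_of_height_le _ hrq (h1.trans h2)
    exact hyq r hr (this ▸ hyq')

lemma aux_final (R : Type) [CommRing R] (p q : Ideal R) [p.IsPrime] (hq : q.IsPrime)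
    (hpq : p ≤ q) (h y : R) (hh : h ∉ q) (hyp : y ∉ p) (hyq : y ∈ q)
    (E : Type) [AddCommGroup E] [Module R E] (f : (R ⧸ p) →ₗ[R] E)
    (hE : Module.Injective R E) (hf : Function.Injective f) :
    ¬ Module.Finite (Localization (Submonoid.powers h))
        (LocalizedModule (Submonoid.powers h) ((R ⧸ p) →ₗ[R] E)) := by
  intro hfin
  have hsurj : ∀ g : (R ⧸ p) →ₗ[R] E, ∃ g' : (R ⧸ p) →ₗ[R] E, y • g' = g := by
    intro g
    obtain ⟨g', hg'⟩ := hE.out (LinearMap.lsmul R (R ⧸ p) y) (by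
      rw [← LinearMap.ker_eq_bot, LinearMap.ker_eq_bot']
      intro a ha
      obtain ⟨a, rfl⟩ := Ideal.Quotient.mk_surjective a
      have ha' : Ideal.Quotient.mk p (y * a) = 0 := ha
      rw [Ideal.Quotient.eq_zero_iff_mem] at ha' ⊢
      exact (Ideal.IsPrime.mem_or_mem inferInstance ha').resolve_left hyp) g
    refine ⟨g', LinearMap.ext fun a => ?_⟩
    rw [← hg' a, LinearMap.smul_apply, LinearMap.lsmul_apply, map_smul]
  obtain ⟨r, hr, hr0⟩ := Submodule.exists_sub_one_mem_and_smul_eq_zero_of_fg_of_le_smul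
    (Ideal.span {algebraMap R (Localization (Submonoid.powers h)) y})
    (⊤ : Submodule (Localization (Submonoid.powers h))
      (LocalizedModule (Submonoid.powers h) ((R ⧸ p) →ₗ[R] E))) hfin.fg_top (by
      intro z _
      induction z using LocalizedModule.induction_on with
      | h g s =>
        obtain ⟨g', rfl⟩ := hsurj g
        have : LocalizedModule.mk (y • g') s =
            algebraMap R (Localization (Submonoid.powers h)) y • LocalizedModule.mk g' s := by
          rw [algebraMap_smul, LocalizedModule.smul'_mk]
        rw [this]
        exact Submodule.smul_mem_smul (Ideal.mem_span_singleton_self _) trivial)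
  obtain ⟨c, hc⟩ := Ideal.mem_span_singleton'.mp hr
  obtain ⟨⟨a, s⟩, has⟩ := IsLocalization.surj (Submonoid.powers h) c
  simp only at has
  have h1 := hr0 (LocalizedModule.mk f 1) trivial
  have h2 : algebraMap R (Localization (Submonoid.powers h)) (s + a * y) =
      algebraMap R (Localization (Submonoid.powers h)) s * r := by
    rw [map_add, map_mul, ← has]
    linear_combination (algebraMap R (Localization (Submonoid.powers h)) s) * hc
  have h3 : LocalizedModule.mk (((s : R) + a * y) • f) (1 : Submonoid.powers h) = 0 := by
    rw [← LocalizedModule.smul'_mk, ← algebraMap_smul (Localization (Submonoid.powers h)), h2,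
      mul_smul, h1, smul_zero]
  obtain ⟨t, ht⟩ := LocalizedModule.mk_eq.mp (h3.trans (LocalizedModule.zero_mk 1).symm)
  have h4 : ((t : R) * ((s : R) + a * y)) • f = 0 := by
    rw [mul_smul]
    simpa [Submonoid.smul_def] using ht
  have h5 : Ideal.Quotient.mk p ((t : R) * ((s : R) + a * y)) = 0 := by
    apply hf
    have h6 := LinearMap.congr_fun h4 1
    rw [map_zero]
    rw [LinearMap.smul_apply, ← map_smul, LinearMap.zero_apply] at h6
    rw [← h6]
    congr 1
    rw [Algebra.smul_def, mul_one]
    rfl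
  rw [Ideal.Quotient.eq_zero_iff_mem] at h5
  have hpow : ∀ u : Submonoid.powers h, (u : R) ∉ q := by
    rintro ⟨_, k, rfl⟩ hu
    exact hh (hq.mem_of_pow_mem k hu)
  have h6 := (hq.mem_or_mem (hpq h5)).resolve_left (hpow t)
  exact hpow s ((Submodule.add_mem_iff_left q (Ideal.mul_mem_left q a hyq)).mp h6)

/-- Regular local ring `R` of dimension `n`, `p` a prime of height
`≤ n - 2` (i.e. `ht p + 2 ≤ n`), `h ∉ p`.  Then `Hom_R(R/p, E_R(R/p))_h` is not a finitely generated
`R_h`-module. -/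
theorem stmt13 (R : Type) [CommRing R] [IsLocalRing R]
    (hreg : IsRegularLocal R)
    (n : ℕ) (hdim : ringKrullDim R = (n : WithBot ℕ∞))
    (p : Ideal R) [p.IsPrime] (hp : idealHeight R p + 2 ≤ (n : ℕ∞))
    (h : R) (hh : h ∉ p)
    (E : Type) [AddCommGroup E] [Module R E]
    (f : (R ⧸ p) →ₗ[R] E) (hf : IsInjectiveHull R f) :
    ¬ Module.Finite (Localization (Submonoid.powers h))
        (LocalizedModule (Submonoid.powers h) ((R ⧸ p) →ₗ[R] E)) := by
  obtain ⟨hnoeth, s, hs, hc⟩ := hreg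
  rw [hdim] at hc
  have hc' : s.card = n := by exact_mod_cast hc
  obtain ⟨-, rs, hlen, hmem, hwr⟩ := aux_regular n R s hs hc'.le hdim.ge
  have hCM := aux_CM p rs hmem hwr
  rw [hlen] at hCM
  have hht : p.height + 2 ≤ (n : ℕ∞) := by
    refine le_trans ?_ hp
    gcongr
    refine le_sInf ?_
    rintro _ ⟨P, hP, rfl⟩
    rw [← PrimeSpectrum.height_eq_orderHeight]
    exact Ideal.height_mono hP
  have hd2 : 2 ≤ ringKrullDim (R ⧸ p) := by
    have hl : IsLocalRing (R ⧸ p) :=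
      IsLocalRing.of_surjective' (Ideal.Quotient.mk p) Ideal.Quotient.mk_surjective
    obtain ⟨d, hd⟩ : ∃ d : ℕ, ringKrullDim (R ⧸ p) = d := by
      rw [← IsLocalRing.maximalIdeal_height_eq_ringKrullDim]
      obtain ⟨d, hd'⟩ := ENat.ne_top_iff_exists.mp
        (Ideal.height_ne_top_of_isPrime (I := IsLocalRing.maximalIdeal (R ⧸ p)))
      exact ⟨d, by rw [← hd']; rfl⟩
    obtain ⟨c, hc⟩ := ENat.ne_top_iff_exists.mp (Ideal.height_ne_top_of_isPrime (I := p))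
    rw [hd, ← hc] at hCM
    rw [← hc] at hht
    rw [hd]
    norm_cast at hCM hht ⊢
    omega
  have hl : IsLocalRing (R ⧸ p) :=
    IsLocalRing.of_surjective' (Ideal.Quotient.mk p) Ideal.Quotient.mk_surjective
  obtain ⟨q, hq, hq0, hhq⟩ := aux_prime hd2 (Ideal.Quotient.mk p h)
    (by rwa [Ne, Ideal.Quotient.eq_zero_iff_mem])
  obtain ⟨y, hyq, hy0⟩ := Submodule.exists_mem_ne_zero_of_ne_bot hq0
  obtain ⟨y, rfl⟩ := Ideal.Quotient.mk_surjective y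
  rw [Ne, Ideal.Quotient.eq_zero_iff_mem] at hy0
  refine aux_final R p (q.comap (Ideal.Quotient.mk p)) (hq.comap _) ?_ h y hhq hy0 hyq E f
    hf.1 hf.2.1
  intro a ha
  rw [Ideal.mem_comap, Ideal.Quotient.eq_zero_iff_mem.mpr ha]
  exact zero_mem _
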